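/- In X = ℝ³ equipped with the ℓ₃ norm and with exponent p = 3, let M₁ = span{(1,0,1/2), (1,1,99/100)} and M₂ = span{(1,0,1/2), (1,1,101/100)}. Then the pair (M₁, M₂) is NOT linear Bregman regular: more precisely, with v_λ = (1−λ)(1,0,1/2) + λ(1,1,1), the ratio D₃(Π³_{M₁∩M₂} v_λ, v_λ) / max{D₃(Π³_{M₁} v_λ, v_λ), D₃(Π³_{M₂} v_λ, v_λ)} tends to infinity as λ → 0⁺, so no constant κ > 0 satisfies D₃(M₁∩M₂, x) ≤ κ max{D₃(M₁,x), D₃(M₂,x)} for all x ∈ X. -/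

import Mathlib

open Filter Topology

noncomputable section

/-- The modulus of convexity of a normed space `X`. -/
def modConvex (X : Type*) [NormedAddCommGroup X] (ε : ℝ) : ℝ :=
  sInf {d : ℝ | ∃ x y : X, ‖x‖ = 1 ∧ ‖y‖ = 1 ∧ ε ≤ ‖x - y‖ ∧ d = 1 - ‖x + y‖ / 2}

/-- The modulus of smoothness of a normed space `X`. -/
def modSmooth (X : Type*) [NormedAddCommGroup X] [NormedSpace ℝ X] (τ : ℝ) : ℝ :=
  sSup {d : ℝ | ∃ x y : X, ‖x‖ = 1 ∧ ‖y‖ = 1 ∧ d = (‖x + τ • y‖ + ‖x - τ • y‖) / 2 - 1}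

/-- `X` is uniformly convex: the modulus of convexity is positive for positive ε. -/
def UnifConvex (X : Type*) [NormedAddCommGroup X] : Prop :=
  ∀ ε : ℝ, 0 < ε → ε ≤ 2 → 0 < modConvex X ε

/-- `X` is uniformly smooth: `ρ_X(τ)/τ → 0` as `τ → 0⁺`. -/
def UnifSmooth (X : Type*) [NormedAddCommGroup X] [NormedSpace ℝ X] : Prop :=
  Tendsto (fun τ => modSmooth X τ / τ) (𝓝[>] (0 : ℝ)) (𝓝 0)

/-- `X` is uniformly convex of power type `ρ`. -/
def PowerConvex (X : Type*) [NormedAddCommGroup X] (ρ : ℝ) : Prop :=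
  ∃ c > (0 : ℝ), ∀ ε ∈ Set.Icc (0 : ℝ) 2, c * ε ^ ρ ≤ modConvex X ε

/-- `X` is uniformly smooth of power type `σ` (with `σ > 1`). -/
def PowerSmooth (X : Type*) [NormedAddCommGroup X] [NormedSpace ℝ X] (σ : ℝ) : Prop :=
  1 < σ ∧ ∃ C > (0 : ℝ), ∀ τ ∈ Set.Icc (0 : ℝ) 1, modSmooth X τ ≤ C * τ ^ σ

variable {X : Type*} [NormedAddCommGroup X] [NormedSpace ℝ X]

/-- The duality mapping `j_p`, the Fréchet derivative of `x ↦ (1/p)‖x‖^p`. -/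
def dualityMap (p : ℝ) (x : X) : X →L[ℝ] ℝ :=
  fderiv ℝ (fun y : X => 1 / p * ‖y‖ ^ p) x

/-- The Bregman distance `D_p(x, y)`. -/
def bregmanDist (p : ℝ) (x y : X) : ℝ :=
  1 / p * ‖x‖ ^ p - 1 / p * ‖y‖ ^ p - dualityMap p y (x - y)

/-- The Bregman projection of `x` onto the set `S`: the minimizer of `m ↦ D_p(m, x)` over `S`. -/
def bregmanProj (p : ℝ) (S : Set X) (x : X) : X :=
  letI : Nonempty X := ⟨x⟩
  Classical.epsilon fun y => y ∈ S ∧ ∀ m ∈ S, bregmanDist p y x ≤ bregmanDist p m x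

/-- The Bregman distance `D_p(S, x)` from the point `x` to the set `S`. -/
def bregmanDistSet (p : ℝ) (S : Set X) (x : X) : ℝ :=
  bregmanDist p (bregmanProj p S x) x

/-- The metric projection of `x` onto the set `S`: the point of `S` nearest to `x`. -/
def metricProj (S : Set X) (x : X) : X :=
  letI : Nonempty X := ⟨x⟩
  Classical.epsilon fun y => y ∈ S ∧ ∀ m ∈ S, ‖x - y‖ ≤ ‖x - m‖

instance : Fact ((1 : ENNReal) ≤ 3) := ⟨by norm_num⟩

/-- `ℝ³` equipped with the `ℓ₃` norm. -/
abbrev l3Space : Type := PiLp 3 (fun _ : Fin 3 => ℝ)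

/-- The vector `(x, y, z)` in `ℝ³` with the `ℓ₃` norm. -/
def vec3 (x y z : ℝ) : l3Space :=
  (WithLp.equiv 3 (∀ _ : Fin 3, ℝ)).symm ![x, y, z]

/-- `M₁ = span{(1, 0, 1/2), (1, 1, 99/100)}`. -/
def subM₁ : Submodule ℝ l3Space :=
  Submodule.span ℝ {vec3 1 0 (1 / 2), vec3 1 1 (99 / 100)}

/-- `M₂ = span{(1, 0, 1/2), (1, 1, 101/100)}`. -/
def subM₂ : Submodule ℝ l3Space :=
  Submodule.span ℝ {vec3 1 0 (1 / 2), vec3 1 1 (101 / 100)}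

/-- The curve `v_λ = (1 − λ)(1, 0, 1/2) + λ(1, 1, 1)`. -/
def vlam (lam : ℝ) : l3Space :=
  (1 - lam) • vec3 1 0 (1 / 2) + lam • vec3 1 1 1

theorem norm_rpow_three (y : l3Space) :
    ‖y‖ ^ (3 : ℝ) = |y 0| ^ (3 : ℝ) + |y 1| ^ (3 : ℝ) + |y 2| ^ (3 : ℝ) := by
  have h3 : (0 : ℝ) < (3 : ENNReal).toReal := by norm_num
  rw [PiLp.norm_eq_sum h3, ← Real.rpow_mul (by positivity)]
  simp [Fin.sum_univ_three]

theorem hasFDeriv_l3 (v : l3Space) :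
    HasFDerivAt (fun y : l3Space => 1 / (3 : ℝ) * ‖y‖ ^ (3 : ℝ))
      ((1 / (3 : ℝ)) • (((3 * |v 0| ^ ((3 : ℝ) - 2) * v 0) • PiLp.proj 3 (fun _ : Fin 3 => ℝ) 0 +
        (3 * |v 1| ^ ((3 : ℝ) - 2) * v 1) • PiLp.proj 3 (fun _ : Fin 3 => ℝ) 1) +
        (3 * |v 2| ^ ((3 : ℝ) - 2) * v 2) • PiLp.proj 3 (fun _ : Fin 3 => ℝ) 2) :
        l3Space →L[ℝ] ℝ) v := by
  have hfun : (fun y : l3Space => 1 / (3 : ℝ) * ‖y‖ ^ (3 : ℝ)) = fun y : l3Space =>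
      1 / (3 : ℝ) * (|y 0| ^ (3 : ℝ) + |y 1| ^ (3 : ℝ) + |y 2| ^ (3 : ℝ)) := by
    funext y
    rw [norm_rpow_three]
  rw [hfun]
  have key : ∀ i : Fin 3, HasFDerivAt (fun y : l3Space => |y i| ^ (3 : ℝ))
      ((3 * |v i| ^ ((3 : ℝ) - 2) * v i) • (PiLp.proj 3 (fun _ : Fin 3 => ℝ) i :
        l3Space →L[ℝ] ℝ)) v := by
    intro i
    have h1 : HasDerivAt (fun x : ℝ => |x| ^ (3 : ℝ)) (3 * |v i| ^ ((3 : ℝ) - 2) * v i) (v i) :=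
      hasDerivAt_abs_rpow (v i) (by norm_num)
    exact h1.comp_hasFDerivAt v
      (PiLp.proj 3 (fun _ : Fin 3 => ℝ) i : l3Space →L[ℝ] ℝ).hasFDerivAt
  exact (((key 0).add (key 1)).add (key 2)).const_mul _

/-- One-dimensional Bregman distance. -/
def dOne (a b : ℝ) : ℝ := |a| ^ 3 / 3 - |b| ^ 3 / 3 - |b| * b * (a - b)

theorem bregmanDist_l3 (x v : l3Space) :
    bregmanDist 3 x v = dOne (x 0) (v 0) + dOne (x 1) (v 1) + dOne (x 2) (v 2) := by
  have e : (3 : ℝ) - 2 = 1 := by norm_num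
  have e3 : ∀ t : ℝ, t ^ (3 : ℝ) = t ^ 3 := fun t => by
    rw [← Real.rpow_natCast]; norm_num
  unfold bregmanDist dualityMap
  rw [(hasFDeriv_l3 v).fderiv, norm_rpow_three, norm_rpow_three, e]
  simp only [e3, Real.rpow_one, dOne]
  simp
  ring

theorem dOne_lower (a b : ℝ) (hb : 0 ≤ b) : 1 / 3 * b * (a - b) ^ 2 ≤ dOne a b := by
  unfold dOne
  rw [abs_of_nonneg hb]
  rcases le_total 0 a with ha | ha
  · rw [abs_of_nonneg ha]
    nlinarith [mul_nonneg (add_nonneg ha hb) (sq_nonneg (a - b))]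
  · rw [abs_of_nonpos ha]
    nlinarith [mul_nonneg (neg_nonneg.2 ha) (add_nonneg (sq_nonneg (a + b))
      (add_nonneg (sq_nonneg a) (sq_nonneg b)))]

theorem exists_proj (S : Submodule ℝ l3Space) (x : l3Space) :
    ∃ y, y ∈ (S : Set l3Space) ∧
      ∀ m ∈ (S : Set l3Space), bregmanDist 3 y x ≤ bregmanDist 3 m x := by
  have hcont : Continuous (fun m : S => bregmanDist 3 (m : l3Space) x) := by
    simp only [bregmanDist]
    have h1 : Continuous (fun m : S => ‖(m : l3Space)‖ ^ (3 : ℝ)) :=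
      Continuous.rpow_const (by fun_prop) (fun _ => Or.inr (by norm_num))
    fun_prop
  set L := dualityMap 3 x with hL
  have hpoly : Tendsto (fun r : ℝ => r * (1 / 3 * r ^ 2 - ‖L‖) +
      (-(1 / 3 * ‖x‖ ^ (3 : ℝ)) + L x)) atTop atTop := by
    apply tendsto_atTop_add_const_right
    apply tendsto_id.atTop_mul_atTop₀
    apply tendsto_atTop_add_const_right
    exact (tendsto_pow_atTop (by norm_num)).const_mul_atTop (by norm_num)
  have hlim : Tendsto (fun m : S => bregmanDist 3 (m : l3Space) x) (cocompact S) atTop := by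
    refine tendsto_atTop_mono ?_ (hpoly.comp (tendsto_norm_cocompact_atTop (E := S)))
    intro m
    have h1 : L (m : l3Space) ≤ ‖L‖ * ‖(m : l3Space)‖ :=
      (le_abs_self _).trans (L.le_opNorm _)
    have e3 : ‖(m : l3Space)‖ ^ (3 : ℝ) = ‖(m : l3Space)‖ ^ 3 := by
      rw [← Real.rpow_natCast]; norm_num
    simp only [bregmanDist, Function.comp, ← hL, map_sub, e3, Submodule.coe_norm]
    nlinarith
  obtain ⟨y, hy⟩ := hcont.exists_forall_le hlim
  exact ⟨y, y.2, fun m hm => hy ⟨m, hm⟩⟩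

theorem proj_spec (S : Submodule ℝ l3Space) (x : l3Space) :
    bregmanProj 3 (S : Set l3Space) x ∈ (S : Set l3Space) ∧
      ∀ m ∈ (S : Set l3Space), bregmanDistSet 3 (S : Set l3Space) x ≤ bregmanDist 3 m x :=
  Classical.epsilon_spec (exists_proj S x)

theorem mem_subM₁ {x : l3Space} : x ∈ subM₁ ↔ x 2 = x 0 / 2 + 49 / 100 * x 1 := by
  unfold subM₁
  rw [Submodule.mem_span_pair]
  constructor
  · rintro ⟨a, b, rfl⟩
    simp [vec3]; ring
  · intro h
    refine ⟨x 0 - x 1, x 1, ?_⟩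
    ext i
    fin_cases i <;> simp [vec3, h]
    ring

theorem mem_subM₂ {x : l3Space} : x ∈ subM₂ ↔ x 2 = x 0 / 2 + 51 / 100 * x 1 := by
  unfold subM₂
  rw [Submodule.mem_span_pair]
  constructor
  · rintro ⟨a, b, rfl⟩
    simp [vec3]; ring
  · intro h
    refine ⟨x 0 - x 1, x 1, ?_⟩
    ext i
    fin_cases i <;> simp [vec3, h]
    ring

theorem vlam_0 (l : ℝ) : vlam l 0 = 1 := by simp [vlam, vec3]
theorem vlam_1 (l : ℝ) : vlam l 1 = l := by simp [vlam, vec3]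
theorem vlam_2 (l : ℝ) : vlam l 2 = 1 / 2 + l / 2 := by simp [vlam, vec3]; ring

theorem inter_lower (l : ℝ) (hl : 0 < l) :
    l ^ 2 / 27 ≤ bregmanDistSet 3 ((subM₁ ⊓ subM₂ : Submodule ℝ l3Space) : Set l3Space)
      (vlam l) := by
  obtain ⟨h, -⟩ := proj_spec (subM₁ ⊓ subM₂) (vlam l)
  unfold bregmanDistSet
  set y := bregmanProj 3 ((subM₁ ⊓ subM₂ : Submodule ℝ l3Space) : Set l3Space) (vlam l)
  obtain ⟨h1, h2⟩ := h
  have h1 := mem_subM₁.1 h1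
  have h2 := mem_subM₂.1 h2
  have hy1 : y 1 = 0 := by linarith
  have hy2 : y 2 = y 0 / 2 := by rw [h1, hy1]; ring
  rw [bregmanDist_l3, vlam_0, vlam_1, vlam_2, hy1, hy2]
  have a0 := dOne_lower (y 0) 1 (by norm_num)
  have a1 := dOne_lower 0 l hl.le
  have a2 := dOne_lower (y 0 / 2) (1 / 2 + l / 2) (by positivity)
  have a1' : 0 ≤ 1 / 3 * l * (0 - l) ^ 2 := by positivity
  have a2' : 0 ≤ l * (y 0 / 2 - (1 / 2 + l / 2)) ^ 2 := by positivity
  nlinarith [sq_nonneg (9 * (y 0 - 1) - l)]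

theorem pos_of_not_mem (S : Submodule ℝ l3Space) (l : ℝ) (hl : 0 < l) (h : vlam l ∉ S) :
    0 < bregmanDistSet 3 (S : Set l3Space) (vlam l) := by
  obtain ⟨hy, -⟩ := proj_spec S (vlam l)
  unfold bregmanDistSet
  set y := bregmanProj 3 (S : Set l3Space) (vlam l)
  rw [bregmanDist_l3, vlam_0, vlam_1, vlam_2]
  have a0 := dOne_lower (y 0) 1 (by norm_num)
  have a1 := dOne_lower (y 1) l hl.le
  have a2 := dOne_lower (y 2) (1 / 2 + l / 2) (by positivity)
  have b0 : 0 ≤ 1 / 3 * 1 * (y 0 - 1) ^ 2 := by positivity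
  have b1 : 0 ≤ 1 / 3 * l * (y 1 - l) ^ 2 := by positivity
  have b2 : 0 ≤ 1 / 3 * (1 / 2 + l / 2) * (y 2 - (1 / 2 + l / 2)) ^ 2 := by positivity
  by_contra hc
  have c0 : 1 / 3 * 1 * (y 0 - 1) ^ 2 = 0 := by linarith
  have c1 : 1 / 3 * l * (y 1 - l) ^ 2 = 0 := by linarith
  have c2 : 1 / 3 * (1 / 2 + l / 2) * (y 2 - (1 / 2 + l / 2)) ^ 2 = 0 := by linarith
  have p1 : 1 / 3 * l ≠ 0 := by positivity
  have p2 : 1 / 3 * (1 / 2 + l / 2) ≠ 0 := by positivity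
  have d0 : y 0 - 1 = 0 := by simpa using c0
  have d1 := pow_eq_zero_iff (two_ne_zero) |>.1 ((mul_eq_zero.1 c1).resolve_left p1)
  have d2 := pow_eq_zero_iff (two_ne_zero) |>.1 ((mul_eq_zero.1 c2).resolve_left p2)
  apply h
  have : vlam l = y := by
    ext i
    fin_cases i
    · change vlam l 0 = y 0
      rw [vlam_0]; linarith
    · change vlam l 1 = y 1
      rw [vlam_1]; linarith
    · change vlam l 2 = y 2
      rw [vlam_2]; linarith
  rw [this]; exact hy

theorem dOne_self (a : ℝ) : dOne a a = 0 := by simp [dOne]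

theorem max_upper (l : ℝ) (hl : 0 < l) :
    max (bregmanDistSet 3 (subM₁ : Set l3Space) (vlam l))
      (bregmanDistSet 3 (subM₂ : Set l3Space) (vlam l)) ≤ l ^ 3 := by
  have hl3 : 0 < l ^ 3 := by positivity
  apply max_le
  · refine ((proj_spec subM₁ (vlam l)).2 (vec3 1 (l * (50 / 49)) (1 / 2 + l / 2)) ?_).trans ?_
    · refine mem_subM₁.2 ?_
      simp [vec3]; ring
    · rw [bregmanDist_l3, vlam_0, vlam_1, vlam_2]
      have e : dOne (l * (50 / 49)) l ≤ l ^ 3 := by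
        rw [dOne, abs_of_pos hl, abs_of_pos (by positivity)]; nlinarith
      simpa [vec3, dOne_self] using e
  · refine ((proj_spec subM₂ (vlam l)).2 (vec3 1 (l * (50 / 51)) (1 / 2 + l / 2)) ?_).trans ?_
    · refine mem_subM₂.2 ?_
      simp [vec3]; ring
    · rw [bregmanDist_l3, vlam_0, vlam_1, vlam_2]
      have e : dOne (l * (50 / 51)) l ≤ l ^ 3 := by
        rw [dOne, abs_of_pos hl, abs_of_pos (by positivity)]; nlinarith
      simpa [vec3, dOne_self] using e

theorem max_pos (l : ℝ) (hl : 0 < l) :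
    0 < max (bregmanDistSet 3 (subM₁ : Set l3Space) (vlam l))
      (bregmanDistSet 3 (subM₂ : Set l3Space) (vlam l)) := by
  refine lt_max_of_lt_left (pos_of_not_mem _ l hl ?_)
  rw [mem_subM₁, vlam_0, vlam_1, vlam_2]
  intro h
  linarith

theorem statement10 :
    Filter.Tendsto
      (fun lam : ℝ =>
        bregmanDistSet 3 ((subM₁ ⊓ subM₂ : Submodule ℝ l3Space) : Set l3Space) (vlam lam) /
          max (bregmanDistSet 3 (subM₁ : Set l3Space) (vlam lam))
              (bregmanDistSet 3 (subM₂ : Set l3Space) (vlam lam)))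
      (𝓝[>] (0 : ℝ)) Filter.atTop ∧
    ¬ ∃ κ > (0 : ℝ), ∀ x : l3Space,
        bregmanDistSet 3 ((subM₁ ⊓ subM₂ : Submodule ℝ l3Space) : Set l3Space) x ≤
          κ * max (bregmanDistSet 3 (subM₁ : Set l3Space) x)
                  (bregmanDistSet 3 (subM₂ : Set l3Space) x) := by
  constructor
  · have h0 : Tendsto (fun l : ℝ => 1 / 27 * l⁻¹) (𝓝[>] (0 : ℝ)) atTop :=
      tendsto_inv_nhdsGT_zero.const_mul_atTop (by norm_num)
    refine tendsto_atTop_mono' _ ?_ h0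
    filter_upwards [self_mem_nhdsWithin] with l hl
    have hl : 0 < l := hl
    rw [le_div_iff₀ (max_pos l hl)]
    calc _ ≤ 1 / 27 * l⁻¹ * l ^ 3 :=
          mul_le_mul_of_nonneg_left (max_upper l hl) (by positivity)
      _ = l ^ 2 / 27 := by field_simp
      _ ≤ _ := inter_lower l hl
  · rintro ⟨κ, hκ, h⟩
    have hl : 0 < 1 / (54 * κ) := by positivity
    have h1 := inter_lower _ hl
    have h2 := mul_le_mul_of_nonneg_left (max_upper _ hl) hκ.le
    have h3 := (h1.trans (h _)).trans h2
    have h4 : κ * (1 / (54 * κ)) ^ 3 = (1 / (54 * κ)) ^ 2 / 54 := by field_simp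
    have : 0 < (1 / (54 * κ)) ^ 2 := by positivity
    linarith
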